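/- Fix S ⊆ N. For every i ∈ S, r_i^S = Σ_{j∈S} A^S_{ij} R_j, and for every i ∉ S, r_i^S = R_i − Σ_{j∈S} A^S_{ij} R_j. (The marginal rewards are the reduced costs of the reward LP, equation (14) of the paper.) -/

import Mathlib

open Matrix BigOperators
open scoped Classical

noncomputable section

/-- Transition matrix of the `S`-active policy: row `i` of `P` if `i ∈ S`,
the `i`-th standard unit row otherwise. -/
def PAct {N : Type*} [DecidableEq N] (P : Matrix N N ℝ) (S : Finset N) : Matrix N N ℝ :=
  fun i j => if i ∈ S then P i j else if i = j then 1 else 0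

/-- Transition matrix of the `Sᶜ`-active policy. -/
def PPas {N : Type*} [DecidableEq N] (P : Matrix N N ℝ) (S : Finset N) : Matrix N N ℝ :=
  fun i j => if i ∈ S then (if i = j then 1 else 0) else P i j

/-- Basis matrix `B^S = I - β P^S`. -/
def BMat {N : Type*} [Fintype N] [DecidableEq N] (β : ℝ) (P : Matrix N N ℝ) (S : Finset N) :
    Matrix N N ℝ := 1 - β • PAct P S

/-- Non-basic matrix `N^S = I - β P^{Sᶜ}`. -/
def NMat {N : Type*} [Fintype N] [DecidableEq N] (β : ℝ) (P : Matrix N N ℝ) (S : Finset N) :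
    Matrix N N ℝ := 1 - β • PPas P S

/-- Basis inverse `H^S = (B^S)⁻¹`. -/
def HMat {N : Type*} [Fintype N] [DecidableEq N] (β : ℝ) (P : Matrix N N ℝ) (S : Finset N) :
    Matrix N N ℝ := (BMat β P S)⁻¹

/-- Tableau matrix `A^S = N^S · H^S`. -/
def AMat {N : Type*} [Fintype N] [DecidableEq N] (β : ℝ) (P : Matrix N N ℝ) (S : Finset N) :
    Matrix N N ℝ := NMat β P S * HMat β P S

/-- Work measure `g^S = H^S · 1_S`. -/
def gWork {N : Type*} [Fintype N] [DecidableEq N] (β : ℝ) (P : Matrix N N ℝ) (S : Finset N) :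
    N → ℝ := (HMat β P S).mulVec (fun j => if j ∈ S then 1 else 0)

/-- Reward measure `f^S = H^S · (R·1_S)`. -/
def fRew {N : Type*} [Fintype N] [DecidableEq N] (β : ℝ) (P : Matrix N N ℝ) (R : N → ℝ)
    (S : Finset N) : N → ℝ := (HMat β P S).mulVec (fun j => if j ∈ S then R j else 0)

/-- Marginal work `w_i^S`. -/
def wMarg {N : Type*} [Fintype N] [DecidableEq N] (β : ℝ) (P : Matrix N N ℝ) (S : Finset N)
    (i : N) : ℝ :=
  if i ∈ S then (1 - β) * gWork β P S i
  else 1 + β * ∑ j ∈ S, P i j * gWork β P S j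

/-- Marginal reward `r_i^S`. -/
def rMarg {N : Type*} [Fintype N] [DecidableEq N] (β : ℝ) (P : Matrix N N ℝ) (R : N → ℝ)
    (S : Finset N) (i : N) : ℝ :=
  if i ∈ S then (1 - β) * fRew β P R S i
  else R i + β * ∑ j ∈ S, P i j * fRew β P R S j

/-- Marginal productivity rate `ν_i^S = r_i^S / w_i^S`. -/
def nuMarg {N : Type*} [Fintype N] [DecidableEq N] (β : ℝ) (P : Matrix N N ℝ) (R : N → ℝ)
    (S : Finset N) (i : N) : ℝ := rMarg β P R S i / wMarg β P S i

/-- Feasibility of a pair of row vectors `(x⁰, x¹)` for initial state `i`: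
`x⁰, x¹ ≥ 0` and `(1-β) x⁰ + x¹ (I - β P) = e_i`. -/
def Feasible {N : Type*} [Fintype N] [DecidableEq N] (β : ℝ) (P : Matrix N N ℝ) (i : N)
    (x0 x1 : N → ℝ) : Prop :=
  (∀ j, 0 ≤ x0 j) ∧ (∀ j, 0 ≤ x1 j) ∧
    (1 - β) • x0 + Matrix.vecMul x1 (1 - β • P) = Pi.single i 1

/-- Modified reward vector `R̂ = R - (I - βP)·Q`. -/
def Rhat {N : Type*} [Fintype N] [DecidableEq N] (β : ℝ) (P : Matrix N N ℝ) (R Q : N → ℝ) :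
    N → ℝ := fun i => R i - ((1 - β • P).mulVec Q) i

/-!
Since `f^S = H^S (R·1_S)`, the sum `∑_{j ∈ S} A^S_{ij} R_j` is the `i`-th entry of
`A^S (R·1_S) = N^S f^S`. Row `i` of `N^S` is `(1 - β) e_i` for `i ∈ S`, which gives the first
identity, and row `i` of `I - β P` for `i ∉ S`. In the latter case `f_i^S = 0`, because rows
outside `S` of `B^S f^S = R·1_S` read `(1 - β) f_i^S = 0` and the same rows of the invertible
matrix `B^S` are nonzero multiples `(1 - β) e_i`; hence the sum over `S` in `r_i^S` is the full
product `(P f^S)_i`. For a stochastic `P` and `|β| < 1`, the matrix `B^S` is invertible by strict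
diagonal dominance.
-/

theorem det_one_sub_ne_zero_of_sum_norm_lt_one {K n : Type*} [NormedField K] [Fintype n]
    [DecidableEq n] {A : Matrix n n K} (hA : ∀ i, ∑ j, ‖A i j‖ < 1) : (1 - A).det ≠ 0 := by
  refine det_ne_zero_of_sum_row_lt_diag fun k => ?_
  have off_diag : ∑ j ∈ Finset.univ.erase k, ‖(1 - A) k j‖ =
      ∑ j ∈ Finset.univ.erase k, ‖A k j‖ := by
    refine Finset.sum_congr rfl fun j hj => ?_
    rw [Matrix.sub_apply, one_apply_ne (Finset.ne_of_mem_erase hj).symm, zero_sub, norm_neg]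
  calc ∑ j ∈ Finset.univ.erase k, ‖(1 - A) k j‖
      = ∑ j, ‖A k j‖ - ‖A k k‖ := by
        rw [off_diag, Finset.sum_erase_eq_sub (Finset.mem_univ k)]
    _ < 1 - ‖A k k‖ := sub_lt_sub_right (hA k) _
    _ ≤ ‖(1 - A) k k‖ := by
        simpa only [Matrix.sub_apply, one_apply_eq, norm_one] using norm_sub_norm_le 1 (A k k)

theorem det_one_sub_smul_ne_zero_of_mem_rowStochastic {n : Type*} [Fintype n] [DecidableEq n]
    {M : Matrix n n ℝ} (hM : M ∈ rowStochastic ℝ n) {β : ℝ} (hβ : |β| < 1) :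
    (1 - β • M).det ≠ 0 := by
  refine det_one_sub_ne_zero_of_sum_norm_lt_one fun i => ?_
  calc ∑ j, ‖(β • M) i j‖ = ∑ j, |β| * M i j := by
        simp only [Matrix.smul_apply, norm_smul, Real.norm_eq_abs,
          abs_of_nonneg (nonneg_of_mem_rowStochastic hM)]
    _ = |β| := by rw [← Finset.mul_sum, sum_row_of_mem_rowStochastic hM, mul_one]
    _ < 1 := hβ

section

variable {N : Type*} [DecidableEq N] {P : Matrix N N ℝ} {S : Finset N} {i : N}

theorem PAct_row_of_mem (hi : i ∈ S) : PAct P S i = P i :=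
  funext fun _ => if_pos hi

theorem PAct_row_of_notMem (hi : i ∉ S) : PAct P S i = (1 : Matrix N N ℝ) i :=
  funext fun _ => if_neg hi

variable [Fintype N]

theorem PAct_mem_rowStochastic (hP : P ∈ rowStochastic ℝ N) (S : Finset N) :
    PAct P S ∈ rowStochastic ℝ N := by
  rw [mem_rowStochastic_iff_sum, ← forall_and] at hP ⊢
  intro i
  by_cases hi : i ∈ S
  · rw [PAct_row_of_mem hi]
    exact hP i
  · rw [PAct_row_of_notMem hi]
    exact forall_and.2 (mem_rowStochastic_iff_sum.1 (one_mem (rowStochastic ℝ N))) i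

theorem PPas_eq_PAct_compl (P : Matrix N N ℝ) (S : Finset N) : PPas P S = PAct P Sᶜ := by
  ext i j
  by_cases hi : i ∈ S <;> simp [PPas, PAct, hi]

variable {β : ℝ} {R : N → ℝ}

theorem isUnit_det_BMat (hP : P ∈ rowStochastic ℝ N) (hβ : |β| < 1) (S : Finset N) :
    IsUnit (BMat β P S).det :=
  (det_one_sub_smul_ne_zero_of_mem_rowStochastic (PAct_mem_rowStochastic hP S) hβ).isUnit

theorem NMat_eq_BMat_compl (β : ℝ) (P : Matrix N N ℝ) (S : Finset N) :
    NMat β P S = BMat β P Sᶜ := by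
  rw [NMat, BMat, PPas_eq_PAct_compl]

theorem BMat_mulVec_apply (x : N → ℝ) : (BMat β P S *ᵥ x) i = x i - β * (PAct P S i ⬝ᵥ x) := by
  rw [BMat, sub_mulVec, one_mulVec, smul_mulVec]
  rfl

theorem BMat_mulVec_apply_of_mem (hi : i ∈ S) (x : N → ℝ) :
    (BMat β P S *ᵥ x) i = x i - β * (P i ⬝ᵥ x) := by
  rw [BMat_mulVec_apply, PAct_row_of_mem hi]

theorem BMat_mulVec_apply_of_notMem (hi : i ∉ S) (x : N → ℝ) :
    (BMat β P S *ᵥ x) i = (1 - β) * x i := by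
  have row_dotProduct : (1 : Matrix N N ℝ) i ⬝ᵥ x = x i := congrFun (one_mulVec x) i
  rw [BMat_mulVec_apply, PAct_row_of_notMem hi, row_dotProduct, sub_mul, one_mul]

theorem one_sub_ne_zero_of_isUnit_det_BMat (hB : IsUnit (BMat β P S).det) (hi : i ∉ S) :
    1 - β ≠ 0 := by
  have hrow : (1 - β) * (HMat β P S *ᵥ Pi.single i 1) i = 1 := by
    rw [← BMat_mulVec_apply_of_notMem hi, HMat, mulVec_mulVec, mul_nonsing_inv _ hB, one_mulVec,
      Pi.single_eq_same]
  exact left_ne_zero_of_mul_eq_one hrow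

theorem BMat_mulVec_fRew (hB : IsUnit (BMat β P S).det) :
    BMat β P S *ᵥ fRew β P R S = fun j => if j ∈ S then R j else 0 := by
  rw [fRew, HMat, mulVec_mulVec, mul_nonsing_inv _ hB, one_mulVec]

theorem fRew_eq_zero_of_notMem (hB : IsUnit (BMat β P S).det) (hi : i ∉ S) :
    fRew β P R S i = 0 := by
  have hrow : (1 - β) * fRew β P R S i = 0 := by
    rw [← BMat_mulVec_apply_of_notMem hi, BMat_mulVec_fRew hB]
    exact if_neg hi
  exact (mul_eq_zero.1 hrow).resolve_left (one_sub_ne_zero_of_isUnit_det_BMat hB hi)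

theorem sum_mul_fRew_eq_dotProduct (hB : IsUnit (BMat β P S).det) (x : N → ℝ) :
    ∑ j ∈ S, x j * fRew β P R S j = x ⬝ᵥ fRew β P R S :=
  Finset.sum_subset (Finset.subset_univ S) fun j _ hj => by
    rw [fRew_eq_zero_of_notMem hB hj, mul_zero]

theorem sum_AMat_mul_eq_NMat_mulVec_fRew :
    ∑ j ∈ S, AMat β P S i j * R j = (NMat β P S *ᵥ fRew β P R S) i := by
  rw [fRew, mulVec_mulVec, ← AMat]
  simp only [mulVec, dotProduct, mul_ite, mul_zero, Finset.sum_ite_mem, Finset.univ_inter]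

theorem rMarg_eq_sum_AMat_of_mem (hi : i ∈ S) :
    rMarg β P R S i = ∑ j ∈ S, AMat β P S i j * R j := by
  rw [sum_AMat_mul_eq_NMat_mulVec_fRew, NMat_eq_BMat_compl,
    BMat_mulVec_apply_of_notMem (Finset.notMem_compl.2 hi), rMarg, if_pos hi]

theorem rMarg_eq_sub_sum_AMat_of_notMem (hB : IsUnit (BMat β P S).det) (hi : i ∉ S) :
    rMarg β P R S i = R i - ∑ j ∈ S, AMat β P S i j * R j := by
  have hA : ∑ j ∈ S, AMat β P S i j * R j = -(β * (P i ⬝ᵥ fRew β P R S)) := by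
    rw [sum_AMat_mul_eq_NMat_mulVec_fRew, NMat_eq_BMat_compl,
      BMat_mulVec_apply_of_mem (Finset.mem_compl.2 hi), fRew_eq_zero_of_notMem hB hi, zero_sub]
  rw [hA, sub_neg_eq_add, rMarg, if_neg hi, sum_mul_fRew_eq_dotProduct hB]

end

theorem stmt8_general {N : Type*} [Fintype N] [DecidableEq N] {P : Matrix N N ℝ} {β : ℝ}
    {S : Finset N} (hB : IsUnit (BMat β P S).det) (R : N → ℝ) :
    (∀ i ∈ S, rMarg β P R S i = ∑ j ∈ S, AMat β P S i j * R j) ∧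
    (∀ i ∉ S, rMarg β P R S i = R i - ∑ j ∈ S, AMat β P S i j * R j) :=
  ⟨fun _ hi => rMarg_eq_sum_AMat_of_mem hi, fun _ hi => rMarg_eq_sub_sum_AMat_of_notMem hB hi⟩

/-- equation (14): the marginal rewards are the reduced costs of the
reward LP. -/
theorem stmt8 {N : Type*} [Fintype N] [DecidableEq N] [Nonempty N]
    (P : Matrix N N ℝ) (hP0 : ∀ i j, 0 ≤ P i j) (hP1 : ∀ i, ∑ j, P i j = 1)
    (β : ℝ) (hβ0 : 0 < β) (hβ1 : β < 1) (R : N → ℝ) (S : Finset N) :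
    (∀ i ∈ S, rMarg β P R S i = ∑ j ∈ S, AMat β P S i j * R j) ∧
    (∀ i ∉ S, rMarg β P R S i = R i - ∑ j ∈ S, AMat β P S i j * R j) :=
  stmt8_general (isUnit_det_BMat (mem_rowStochastic_iff_sum.2 ⟨hP0, hP1⟩)
    (by rwa [abs_of_pos hβ0]) S) R
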